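/- arXiv:1704.06988 — 3 statements merged into one kernel-verified Lean document; each statement's English description precedes it below -/
import Mathlib

section
/- Let κ, θ > 0 and B > 0 be fixed. There exist constants c, C > 0, depending only on κ, θ, and B, such that for every n ≥ 1, every y ∈ ℝⁿ with max_i |y_i| ≤ B, and every integer N ≥ exp(c·n), the variance (with respect to the ensemble X^(1),…,X^(N)) of log L^P(y | θ, X^(1:N)) is at most C·exp(c·n)/N. (This is a precise form of Proposition 1: Var(log L^P) = O(eⁿ/N) as n, N → ∞.) -/
/-!
Write `m` for the mean of the weight `∏ i, N(y i | x i, θ)` under the forecast law, let `Z j` be the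
`j`-th weight divided by `m`, and `S` the average of the `Z j`. Then `log L` and `log S` differ by
the constant `log m`, so the variance is at most `E (log S)²`.

The pointwise bound `(log S)² ≤ (1/N) ∑ j, 4 (S - 1)² (1 + (log Z j)²)` (`log_sq_le`) holds:
if `S ≥ 1/2` because `|log S| ≤ 2 |S - 1|`, and if `S < 1/2` because `4 (S - 1)² ≥ 1` and, by
concavity of the logarithm, `(log S)² ≤ ((1/N) ∑ j, log (Z j))²`.
On taking expectations, the cross terms `E (Z k - 1) (Z l - 1) (1 + (log Z j)²)` with `k ≠ l` vanish
by independence, since `E Z k = 1`, and the `N` diagonal terms are at most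
`K² E (1 + (log Z)²)` when `Z ≤ K` (`integral_sum_sq_mul_le`). Hence
`Var (log L) ≤ 4 K² (1 + E (log Z)²) / N` (`variance_log_mean_le`).

For the Gaussian model `Z` is a product of `n` one-dimensional normalised weights, each bounded by
a constant and with logarithm dominated by a square-integrable function, uniformly in `|y i| ≤ B`
(`gaussian_weight_bounds`). So `K` is exponential in `n` and `E (log Z)²` is quadratic in `n`.
-/

open MeasureTheory ProbabilityTheory

/-- The particle likelihood of Example 1: the average over the ensemble of the
Gaussian likelihoods `N_n(y | X^(j), θ I_n)`. -/
noncomputable def particleLik (n N : ℕ) (θ : ℝ) (y : Fin n → ℝ)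
    (X : Fin N → Fin n → ℝ) : ℝ :=
  (1 / (N : ℝ)) * ∑ j, ∏ i,
    (2 * Real.pi * θ) ^ (-(1 : ℝ) / 2) * Real.exp (-(X j i - y i) ^ 2 / (2 * θ))

lemma log_sq_le {N : ℕ} (hN : 0 < N) (z : Fin N → ℝ) (hz : ∀ j, 0 < z j) :
    Real.log ((1 / (N : ℝ)) * ∑ j, z j) ^ 2 ≤
      (1 / (N : ℝ)) * ∑ j, 4 * ((1 / (N : ℝ)) * ∑ k, z k - 1) ^ 2 * (1 + Real.log (z j) ^ 2) := by
  have hN' : (0 : ℝ) < N := by exact_mod_cast hN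
  have : Nonempty (Fin N) := ⟨⟨0, hN⟩⟩
  have hsum : 0 < ∑ j, z j := Finset.sum_pos (fun j _ => hz j) Finset.univ_nonempty
  set S := (1 / (N : ℝ)) * ∑ k, z k with hS
  have hSpos : 0 < S := by positivity
  have hrhs : (1 / (N : ℝ)) * ∑ j, 4 * (S - 1) ^ 2 * (1 + Real.log (z j) ^ 2)
      = 4 * (S - 1) ^ 2 * (1 + (1 / (N : ℝ)) * ∑ j, Real.log (z j) ^ 2) := by
    rw [← Finset.mul_sum, Finset.sum_add_distrib]
    simp
    field_simp
  rw [hrhs]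
  have hV : 0 ≤ (1 / (N : ℝ)) * ∑ j, Real.log (z j) ^ 2 := by positivity
  rcases le_or_gt (1 / 2) S with h | h
  · have h1 : Real.log S ≤ S - 1 := Real.log_le_sub_one_of_pos hSpos
    have h2 : 1 - S⁻¹ ≤ Real.log S := Real.one_sub_inv_le_log_of_pos hSpos
    have h3 : Real.log S ^ 2 ≤ 4 * (S - 1) ^ 2 := by
      rw [show 4 * (S - 1) ^ 2 = (2 * (S - 1)) ^ 2 by ring]
      apply sq_le_sq.2
      rcases le_total 1 S with h4 | h4
      · rw [abs_of_nonneg (Real.log_nonneg h4), abs_of_nonneg (by linarith)]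
        linarith
      · rw [abs_of_nonpos (Real.log_nonpos hSpos.le h4), abs_of_nonpos (by linarith)]
        have : S⁻¹ - 1 ≤ 2 * (1 - S) := by
          have : S⁻¹ - 1 = (1 - S) * S⁻¹ := by field_simp
          rw [this, mul_comm]
          apply mul_le_mul_of_nonneg_right _ (by linarith)
          rw [inv_le_comm₀ hSpos (by norm_num)]
          linarith
        linarith
    nlinarith [sq_nonneg (S - 1)]
  · have hJ : (1 / (N : ℝ)) * ∑ j, Real.log (z j) ≤ Real.log S := by
      have := strictConcaveOn_log_Ioi.concaveOn.le_map_sum (t := Finset.univ)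
        (w := fun _ : Fin N => 1 / (N : ℝ)) (p := z) (fun _ _ => by positivity)
        (by simp; field_simp) (fun i _ => hz i)
      simpa only [smul_eq_mul, ← Finset.mul_sum] using this
    have hlog : Real.log S ≤ 0 := Real.log_nonpos hSpos.le (by linarith)
    have h1 : Real.log S ^ 2 ≤ ((1 / (N : ℝ)) * ∑ j, Real.log (z j)) ^ 2 := by nlinarith
    have h2 : ((1 / (N : ℝ)) * ∑ j, Real.log (z j)) ^ 2
        ≤ (1 / (N : ℝ)) * ∑ j, Real.log (z j) ^ 2 := by
      have := sq_sum_le_card_mul_sum_sq (s := (Finset.univ : Finset (Fin N)))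
        (f := fun j => Real.log (z j))
      simp only [Finset.card_univ, Fintype.card_fin] at this
      rw [mul_pow]
      calc (1 / (N : ℝ)) ^ 2 * (∑ j, Real.log (z j)) ^ 2
          ≤ (1 / (N : ℝ)) ^ 2 * (N * ∑ j, Real.log (z j) ^ 2) := by gcongr
        _ = _ := by field_simp
    have h3 : 1 ≤ 4 * (S - 1) ^ 2 := by nlinarith
    nlinarith

/-- For i.i.d. samples, the off-diagonal terms in the expansion of the square vanish even in the
presence of a weight depending on a single sample. -/
lemma integral_sum_sq_mul_le {E : Type*} [MeasurableSpace E] (μ : Measure E)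
    [IsProbabilityMeasure μ] {N : ℕ} (h w : E → ℝ) (K : ℝ) (hm : Measurable h)
    (hb : ∀ x, |h x| ≤ K) (h0 : ∫ x, h x ∂μ = 0) (hw0 : ∀ x, 0 ≤ w x) (hw : Integrable w μ)
    (j : Fin N) :
    Integrable (fun X : Fin N → E => (∑ k, h (X k)) ^ 2 * w (X j)) (Measure.pi fun _ => μ) ∧
    ∫ X : Fin N → E, (∑ k, h (X k)) ^ 2 * w (X j) ∂(Measure.pi fun _ => μ)
      ≤ N * (K ^ 2 * ∫ x, w x ∂μ) := by
  have hwj : Integrable (fun X : Fin N → E => w (X j)) (Measure.pi fun _ => μ) :=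
    integrable_comp_eval (μ := fun _ : Fin N => μ) hw
  have hint : ∀ k l : Fin N, Integrable (fun X : Fin N → E => h (X k) * h (X l) * w (X j))
      (Measure.pi fun _ => μ) := by
    intro k l
    refine Integrable.bdd_mul (c := K * K) hwj (by fun_prop) (ae_of_all _ fun X => ?_)
    rw [norm_mul]
    exact mul_le_mul (hb _) (hb _) (norm_nonneg _) ((abs_nonneg _).trans (hb (X k)))
  have hexp : (fun X : Fin N → E => (∑ k, h (X k)) ^ 2 * w (X j))
      = fun X => ∑ k, ∑ l, h (X k) * h (X l) * w (X j) := by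
    funext X
    rw [sq, Finset.sum_mul_sum, Finset.sum_mul]
    simp_rw [Finset.sum_mul]
  have hoff : ∀ k l : Fin N, k ≠ l → k ≠ j →
      ∫ X : Fin N → E, h (X k) * h (X l) * w (X j) ∂(Measure.pi fun _ => μ) = 0 := by
    intro k l hkl hkj
    have hprod := integral_fintype_prod_eq_prod (𝕜 := ℝ) (μ := fun _ : Fin N => μ)
      (fun (i : Fin N) (x : E) =>
        ((if k = i then h x else 1) * (if l = i then h x else 1)) * (if j = i then w x else 1))
    simp only [Finset.prod_mul_distrib, Finset.prod_ite_eq, Finset.mem_univ, if_true] at hprod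
    rw [hprod]
    apply Finset.prod_eq_zero (Finset.mem_univ k)
    simp [hkl.symm, hkj.symm, h0]
  rw [hexp]
  refine ⟨integrable_finsetSum _ fun k _ => integrable_finsetSum _ fun l _ => hint k l, ?_⟩
  rw [integral_finsetSum _ fun k _ => integrable_finsetSum _ fun l _ => hint k l]
  simp_rw [integral_finsetSum _ fun l _ => hint _ l]
  calc _ ≤ ∑ k : Fin N, K ^ 2 * ∫ x, w x ∂μ := by
        refine Finset.sum_le_sum fun k _ => ?_
        rw [Finset.sum_eq_single k]
        · rw [← integral_comp_eval (μ := fun _ : Fin N => μ) (i := j) hw.aestronglyMeasurable,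
            ← integral_const_mul]
          refine integral_mono (hint k k) (hwj.const_mul _) fun X => ?_
          refine mul_le_mul_of_nonneg_right ?_ (hw0 _)
          rw [← sq, ← sq_abs]
          exact pow_le_pow_left₀ (abs_nonneg _) (hb _) 2
        · intro l _ hlk
          by_cases hkj : k = j
          · have := hoff l k hlk (fun hlj => hlk (hlj.trans hkj.symm))
            rw [← this]
            congr 1
            funext X
            ring
          · exact hoff k l hlk.symm hkj
        · simp
    _ = _ := by simp

lemma variance_log_mean_le {E : Type*} [MeasurableSpace E] (μ : Measure E)
    [IsProbabilityMeasure μ] {N : ℕ} (hN : 0 < N) (g : E → ℝ) (K : ℝ) (hm : Measurable g)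
    (hpos : ∀ x, 0 < g x) (hK1 : 1 ≤ K) (hK : ∀ x, g x ≤ K) (h1 : ∫ x, g x ∂μ = 1)
    (hlog : Integrable (fun x => Real.log (g x) ^ 2) μ) :
    variance (fun X : Fin N → E => Real.log ((1 / (N : ℝ)) * ∑ j, g (X j)))
      (Measure.pi fun _ => μ) ≤ 4 * K ^ 2 * (1 + ∫ x, Real.log (g x) ^ 2 ∂μ) / N := by
  have hN' : (0 : ℝ) < N := by exact_mod_cast hN
  have hgi : Integrable g μ :=
    Integrable.of_bound hm.aestronglyMeasurable K
      (ae_of_all _ fun x => by rw [Real.norm_of_nonneg (hpos x).le]; exact hK x)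
  have key := fun j : Fin N => integral_sum_sq_mul_le μ (N := N) (fun x => g x - 1)
    (fun x => 1 + Real.log (g x) ^ 2) K (by fun_prop)
    (fun x => by rw [abs_le]; constructor <;> linarith [hpos x, hK x])
    (by rw [integral_sub hgi (integrable_const _), h1]; simp)
    (fun x => by positivity) ((integrable_const _).add hlog) j
  have hw : ∫ x, (1 + Real.log (g x) ^ 2) ∂μ = 1 + ∫ x, Real.log (g x) ^ 2 ∂μ := by
    rw [integral_add (integrable_const _) hlog]; simp
  simp only [hw] at key
  refine (variance_le_expectation_sq
    (Measurable.aestronglyMeasurable (by fun_prop))).trans ?_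
  have hpt : ∀ X : Fin N → E, Real.log ((1 / (N : ℝ)) * ∑ j, g (X j)) ^ 2 ≤
      4 / (N : ℝ) ^ 3 * ∑ j, (∑ k, (g (X k) - 1)) ^ 2 * (1 + Real.log (g (X j)) ^ 2) := by
    intro X
    refine (log_sq_le hN (fun j => g (X j)) fun j => hpos _).trans (le_of_eq ?_)
    have : (1 / (N : ℝ)) * ∑ k, g (X k) - 1 = (1 / (N : ℝ)) * ∑ k, (g (X k) - 1) := by
      rw [Finset.sum_sub_distrib]
      simp
      field_simp
    rw [this]
    generalize ∑ k, (g (X k) - 1) = T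
    rw [Finset.mul_sum, Finset.mul_sum]
    refine Finset.sum_congr rfl fun j _ => ?_
    field_simp
  refine (integral_mono_of_nonneg (ae_of_all _ fun X => sq_nonneg _)
    ((integrable_finsetSum Finset.univ fun j _ => (key j).1).const_mul _)
    (ae_of_all _ hpt)).trans ?_
  rw [integral_const_mul, integral_finsetSum _ fun j _ => (key j).1]
  calc _ ≤ 4 / (N : ℝ) ^ 3 * ∑ j : Fin N, N * (K ^ 2 * (1 + ∫ x, Real.log (g x) ^ 2 ∂μ)) := by
        gcongr with j
        exact (key j).2
    _ = _ := by
        simp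
        field_simp

/-- Uniform control of the normalised one-dimensional Gaussian weight over `|t| ≤ B`. The lower
bound on the normalising constant comes from `(x - t)² ≤ 2 x² + 2 B²`. -/
lemma gaussian_weight_bounds (κ : NNReal) (θ B a : ℝ) (hθ : 0 < θ) (ha : 0 < a) :
    ∃ K, 1 ≤ K ∧ ∃ q : ℝ → ℝ, Integrable (fun x => q x ^ 2) (gaussianReal 0 κ) ∧
      ∀ t, |t| ≤ B →
        0 < ∫ x, a * Real.exp (-(x - t) ^ 2 / (2 * θ)) ∂(gaussianReal 0 κ) ∧
        ∀ x, a * Real.exp (-(x - t) ^ 2 / (2 * θ)) /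
            (∫ x, a * Real.exp (-(x - t) ^ 2 / (2 * θ)) ∂(gaussianReal 0 κ)) ≤ K ∧
          |Real.log (a * Real.exp (-(x - t) ^ 2 / (2 * θ)) /
            (∫ x, a * Real.exp (-(x - t) ^ 2 / (2 * θ)) ∂(gaussianReal 0 κ)))| ≤ q x := by
  set γ := gaussianReal 0 κ
  have hle1 : ∀ r : ℝ, 0 ≤ r → Real.exp (-r) ≤ 1 := fun r hr => Real.exp_le_one_iff.2 (by linarith)
  have hint0 : Integrable (fun x : ℝ => Real.exp (-((x ^ 2 + B ^ 2) / θ))) γ :=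
    Integrable.of_bound (by fun_prop) 1 (ae_of_all _ fun x => by
      rw [Real.norm_of_nonneg (Real.exp_pos _).le]; exact hle1 _ (by positivity))
  have hint : ∀ t : ℝ, Integrable (fun x : ℝ => Real.exp (-(x - t) ^ 2 / (2 * θ))) γ := fun t =>
    Integrable.of_bound (by fun_prop) 1 (ae_of_all _ fun x => by
      rw [Real.norm_of_nonneg (Real.exp_pos _).le, neg_div]; exact hle1 _ (by positivity))
  set m := a * ∫ x, Real.exp (-((x ^ 2 + B ^ 2) / θ)) ∂γ with hm
  have hmpos : 0 < m := mul_pos ha (integral_exp_pos hint0)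
  have hsq : ∀ t x : ℝ, |t| ≤ B → (x - t) ^ 2 / (2 * θ) ≤ (x ^ 2 + B ^ 2) / θ := by
    intro t x ht
    have : t ^ 2 ≤ B ^ 2 := sq_le_sq.2 (ht.trans (le_abs_self B))
    rw [show (x ^ 2 + B ^ 2) / θ = (2 * (x ^ 2 + B ^ 2)) / (2 * θ) by field_simp]
    gcongr
    nlinarith [sq_nonneg (x + t)]
  have hmle : m ≤ a := by
    have : ∫ x, Real.exp (-((x ^ 2 + B ^ 2) / θ)) ∂γ ≤ ∫ x, (1 : ℝ) ∂γ :=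
      integral_mono hint0 (integrable_const _) fun x => hle1 _ (by positivity)
    simp at this
    nlinarith
  refine ⟨a / m, (one_le_div hmpos).2 hmle,
    fun x => 2 * |Real.log a| + |Real.log m| + (x ^ 2 + B ^ 2) / θ, ?_, ?_⟩
  · have h4 : Integrable (fun x : ℝ => x ^ 4) γ := by
      have := (memLp_id_gaussianReal (μ := 0) (v := κ) 4).integrable_norm_pow (p := 4) (by norm_num)
      simpa [Even.pow_abs (show Even 4 by decide)] using this
    have h2 : Integrable (fun x : ℝ => x ^ 2) γ := by
      have := (memLp_id_gaussianReal (μ := 0) (v := κ) 2).integrable_norm_pow (p := 2) (by norm_num)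
      simpa using this
    have := ((h4.const_mul ((1 / θ) ^ 2)).add (h2.const_mul
      (2 / θ * (2 * |Real.log a| + |Real.log m| + B ^ 2 / θ)))).add
      (integrable_const ((2 * |Real.log a| + |Real.log m| + B ^ 2 / θ) ^ 2))
    refine this.congr (ae_of_all _ fun x => ?_)
    simp only [Pi.add_apply]
    ring
  · intro t ht
    set p := ∫ x, a * Real.exp (-(x - t) ^ 2 / (2 * θ)) ∂γ with hp
    have hp' : p = a * ∫ x, Real.exp (-(x - t) ^ 2 / (2 * θ)) ∂γ := integral_const_mul _ _
    have hmp : m ≤ p := by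
      rw [hp', hm]
      refine mul_le_mul_of_nonneg_left (integral_mono hint0 (hint t) fun x => ?_) ha.le
      apply Real.exp_le_exp.2
      rw [neg_div]
      linarith [hsq t x ht]
    have hpa : p ≤ a := by
      have : ∫ x, Real.exp (-(x - t) ^ 2 / (2 * θ)) ∂γ ≤ ∫ x, (1 : ℝ) ∂γ :=
        integral_mono (hint t) (integrable_const _) fun x => by
          simp only [neg_div]
          exact hle1 _ (by positivity)
      simp at this
      rw [hp']
      nlinarith
    have hppos : 0 < p := hmpos.trans_le hmp
    refine ⟨hppos, fun x => ⟨?_, ?_⟩⟩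
    · have : Real.exp (-(x - t) ^ 2 / (2 * θ)) ≤ 1 := by
        rw [neg_div]; exact hle1 _ (by positivity)
      apply div_le_div₀ ha.le _ hmpos hmp
      nlinarith
    · rw [Real.log_div (by positivity) hppos.ne', Real.log_mul ha.ne' (Real.exp_pos _).ne',
        Real.log_exp, neg_div]
      have h1 := Real.log_le_log hmpos hmp
      have h2 := Real.log_le_log hppos hpa
      have h3 := hsq t x ht
      have h4 : 0 ≤ (x - t) ^ 2 / (2 * θ) := by positivity
      have := neg_abs_le (Real.log a)
      have := neg_abs_le (Real.log m)
      have := le_abs_self (Real.log a)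
      have := le_abs_self (Real.log m)
      have := abs_nonneg (Real.log a)
      have := abs_nonneg (Real.log m)
      rw [abs_le]
      constructor <;> linarith

/-- Proposition 1: `Var(log L^P) = O(eⁿ/N)`. For fixed `κ, θ, B > 0` there are
constants `c, C > 0` such that for all `n ≥ 1`, all data `y` bounded by `B`, and all
ensemble sizes `N ≥ exp(c n)`, the variance (over i.i.d. `N_n(0, κ I_n)` ensembles) of
the log particle likelihood is at most `C exp(c n)/N`. -/
theorem particle_loglik_variance_exponential
    (κ θ B : ℝ) (hκ : 0 < κ) (hθ : 0 < θ) (hB : 0 < B) :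
    ∃ c > 0, ∃ C > 0, ∀ (n : ℕ), 1 ≤ n → ∀ (y : Fin n → ℝ), (∀ i, |y i| ≤ B) →
      ∀ (N : ℕ), Real.exp (c * n) ≤ (N : ℝ) →
        variance (fun X : Fin N → Fin n → ℝ => Real.log (particleLik n N θ y X))
          (Measure.pi fun _ : Fin N =>
            Measure.pi fun _ : Fin n => gaussianReal 0 κ.toNNReal)
        ≤ C * Real.exp (c * n) / N := by
  set γ := gaussianReal 0 κ.toNNReal
  set a : ℝ := (2 * Real.pi * θ) ^ (-(1 : ℝ) / 2) with ha_def
  have ha : 0 < a := by positivity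
  obtain ⟨K, hK1, q, hq, hbd⟩ := gaussian_weight_bounds κ.toNNReal θ B a hθ ha
  have hKpos : 0 < K := by linarith
  have hlogK : 0 ≤ Real.log K := Real.log_nonneg hK1
  have hD : 0 ≤ ∫ x, q x ^ 2 ∂γ := integral_nonneg fun x => sq_nonneg _
  -- The variance is at most `4 K ^ (2 n) (1 + n² ∫ q²) / N`, and `n² ≤ exp (2 n)`.
  refine ⟨2 * Real.log K + 2, by positivity, 4 * (1 + ∫ x, q x ^ 2 ∂γ), by positivity, ?_⟩
  intro n hn y hy N hN
  have hN' : (0 : ℝ) < N := (Real.exp_pos _).trans_le hN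
  have hN0 : 0 < N := by exact_mod_cast hN'
  set p : Fin n → ℝ := fun i => ∫ x, a * Real.exp (-(x - y i) ^ 2 / (2 * θ)) ∂γ with hp
  have hppos : ∀ i, 0 < p i := fun i => (hbd (y i) (hy i)).1
  set φ : Fin n → ℝ → ℝ := fun i x => a * Real.exp (-(x - y i) ^ 2 / (2 * θ)) / p i with hφ
  have hφpos : ∀ i x, 0 < φ i x := fun i x => div_pos (by positivity) (hppos i)
  have hφK : ∀ i x, φ i x ≤ K := fun i x => ((hbd (y i) (hy i)).2 x).1
  have hφq : ∀ i x, |Real.log (φ i x)| ≤ q x := fun i x => ((hbd (y i) (hy i)).2 x).2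
  have hφm : ∀ i, Measurable (φ i) := fun i => by fun_prop
  set g : (Fin n → ℝ) → ℝ := fun x => ∏ i, φ i (x i) with hg
  have hgm : Measurable g := by fun_prop
  have hgpos : ∀ x, 0 < g x := fun x => Finset.prod_pos fun i _ => hφpos i _
  have hgK : ∀ x, g x ≤ K ^ n := fun x => by
    calc g x ≤ ∏ _i : Fin n, K :=
          Finset.prod_le_prod (fun i _ => (hφpos i _).le) fun i _ => hφK i _
      _ = K ^ n := by simp
  have hg1 : ∫ x, g x ∂(Measure.pi fun _ : Fin n => γ) = 1 := by
    rw [hg, integral_fintype_prod_eq_prod (𝕜 := ℝ) (μ := fun _ : Fin n => γ) φ]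
    refine Finset.prod_eq_one fun i _ => ?_
    rw [hφ, integral_div]
    exact div_self (hppos i).ne'
  have hglog : ∀ x, Real.log (g x) ^ 2 ≤ n * ∑ i, q (x i) ^ 2 := by
    intro x
    rw [hg, Real.log_prod fun i _ => (hφpos i _).ne']
    have := sq_sum_le_card_mul_sum_sq (s := (Finset.univ : Finset (Fin n)))
      (f := fun i => Real.log (φ i (x i)))
    simp only [Finset.card_univ, Fintype.card_fin] at this
    refine this.trans ?_
    refine mul_le_mul_of_nonneg_left (Finset.sum_le_sum fun i _ => ?_) (by positivity)
    exact sq_le_sq.2 ((hφq i _).trans (le_abs_self _))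
  have hqi : Integrable (fun x : Fin n → ℝ => n * ∑ i, q (x i) ^ 2)
      (Measure.pi fun _ : Fin n => γ) :=
    (integrable_finsetSum _ fun i _ =>
      integrable_comp_eval (μ := fun _ : Fin n => γ) (i := i) hq).const_mul _
  have hlogi : Integrable (fun x => Real.log (g x) ^ 2) (Measure.pi fun _ : Fin n => γ) :=
    hqi.mono' (Measurable.aestronglyMeasurable (by fun_prop)) (ae_of_all _ fun x => by
      rw [Real.norm_of_nonneg (sq_nonneg _)]; exact hglog x)
  have hlogle : ∫ x, Real.log (g x) ^ 2 ∂(Measure.pi fun _ : Fin n => γ)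
      ≤ (n : ℝ) ^ 2 * ∫ x, q x ^ 2 ∂γ := by
    refine (integral_mono hlogi hqi hglog).trans (le_of_eq ?_)
    rw [integral_const_mul, integral_finsetSum _ fun i _ =>
      integrable_comp_eval (μ := fun _ : Fin n => γ) (i := i) hq]
    have : ∀ i : Fin n, ∫ x : Fin n → ℝ, q (x i) ^ 2 ∂(Measure.pi fun _ : Fin n => γ)
        = ∫ x, q x ^ 2 ∂γ := fun i =>
      integral_comp_eval (μ := fun _ : Fin n => γ) (i := i) hq.aestronglyMeasurable
    simp [this]
    ring
  have hvar := variance_log_mean_le (Measure.pi fun _ : Fin n => γ) hN0 g (K ^ n) hgm hgpos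
    (one_le_pow₀ hK1) hgK hg1 hlogi
  have hP : 0 < ∏ i, p i := Finset.prod_pos fun i _ => hppos i
  have : Nonempty (Fin N) := ⟨⟨0, hN0⟩⟩
  have hshift : (fun X : Fin N → Fin n → ℝ => Real.log (particleLik n N θ y X))
      = fun X => Real.log ((1 / (N : ℝ)) * ∑ j, g (X j)) + Real.log (∏ i, p i) := by
    funext X
    have hs : 0 < ∑ j, g (X j) := Finset.sum_pos (fun j _ => hgpos _) Finset.univ_nonempty
    rw [← Real.log_mul (by positivity) hP.ne', mul_assoc, Finset.sum_mul, particleLik]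
    congr 3
    funext j
    rw [hg, ← Finset.prod_mul_distrib]
    refine Finset.prod_congr rfl fun i _ => ?_
    exact (div_mul_cancel₀ _ (hppos i).ne').symm
  rw [hshift, variance_add_const (Measurable.aestronglyMeasurable (by fun_prop))]
  refine hvar.trans ?_
  gcongr ?_ / _
  have hexp : Real.exp ((2 * Real.log K + 2) * n) = (K ^ n) ^ 2 * Real.exp n ^ 2 := by
    rw [show (2 * Real.log K + 2) * n = ((2 * n : ℕ) : ℝ) * Real.log K + ((2 : ℕ) : ℝ) * n by
      push_cast; ring, Real.exp_add, Real.exp_nat_mul, Real.exp_nat_mul, Real.exp_log hKpos]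
    ring
  have hn1 : (1 : ℝ) ≤ Real.exp n ^ 2 := one_le_pow₀ (Real.one_le_exp (by positivity))
  have hn2 : (n : ℝ) ^ 2 ≤ Real.exp n ^ 2 :=
    pow_le_pow_left₀ (by positivity) (by linarith [Real.add_one_le_exp (n : ℝ)]) 2
  rw [hexp]
  calc 4 * (K ^ n) ^ 2 * (1 + ∫ x, Real.log (g x) ^ 2 ∂(Measure.pi fun _ : Fin n => γ))
      ≤ 4 * (K ^ n) ^ 2 * (Real.exp n ^ 2 + Real.exp n ^ 2 * ∫ x, q x ^ 2 ∂γ) := by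
        gcongr
        exact hlogle.trans (by gcongr)
    _ = _ := by ring
end

section
/- Let κ, θ > 0 and B > 0 be fixed. There exists a constant C > 0, depending only on κ, θ, and B, such that for every n ≥ 1, every y ∈ ℝⁿ with max_i |y_i| ≤ B, and every integer N ≥ 2, the variance (with respect to the ensemble X^(1),…,X^(N)) of log L^E(y | θ, X^(1:N)) is at most C·n/N. (This is a precise form of Proposition 2: Var(log L^E) = O(n/N) as n, N → ∞.) -/
/-!
The log likelihood is a sum over the `n` coordinates of a function of one coordinate of the ensemble
(`log_enkfLik`). The columns of an array with i.i.d. entries are independent, which is expressed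
by the invariance of its law under transposition (`measurePreserving_flip_pi`), so the
variance is the sum of the `n` variances of the coordinate terms, and it suffices to bound each of
them by `C / N` (`exists_variance_coordLogLik_le`).

The variance of a coordinate term is at most its mean squared distance to a constant, here the
Gaussian log density with the population mean `0` and variance `κ + θ`. As `σ̂² ≥ θ > 0`, the log
density is Lipschitz in the variance, and its dependence on the mean is at most quadratic, so the
squared distance is bounded by a combination of `(σ̂² - κ - θ)²`, `μ̂²` and `μ̂⁴`
(`abs_logDensity_sub_le`). Since
`(N - 1) (σ̂² - κ - θ) = ∑ (xⱼ² - κ) + κ - (∑ xⱼ)² / N`,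
everything reduces to the second moment of `∑ (xⱼ² - κ)`, which is `N` times a variance
(`moment_sum_sq_sub`), and to the second and fourth moments of `∑ xⱼ`, which has the law of `√N`
times a single entry (`moment_sum_pi_gaussian`).
-/

open MeasureTheory ProbabilityTheory

/-- Sample mean of an ensemble of reals. -/
noncomputable def sampleMean (N : ℕ) (x : Fin N → ℝ) : ℝ :=
  (1 / (N : ℝ)) * ∑ j, x j

/-- The diagonal EnKF forecast-variance estimate: sample variance (with denominator
`N - 1`) plus the noise variance `θ`. -/
noncomputable def sigmaHatSq (N : ℕ) (θ : ℝ) (x : Fin N → ℝ) : ℝ :=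
  (1 / ((N : ℝ) - 1)) * ∑ j, (x j - sampleMean N x) ^ 2 + θ

/-- The EnKF likelihood of Example 1 with diagonal (tapered) covariance estimate:
`L^E(y | θ, X^(1:N)) = ∏ᵢ (2π σ̂ᵢ²)^(−1/2) exp(−(yᵢ − μ̂ᵢ)²/(2σ̂ᵢ²))`. -/
noncomputable def enkfLik (n N : ℕ) (θ : ℝ) (y : Fin n → ℝ)
    (X : Fin N → Fin n → ℝ) : ℝ :=
  ∏ i, (2 * Real.pi * sigmaHatSq N θ (fun j => X j i)) ^ (-(1 : ℝ) / 2) *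
    Real.exp (-(y i - sampleMean N (fun j => X j i)) ^ 2 /
      (2 * sigmaHatSq N θ (fun j => X j i)))

/-- Transposing an array of i.i.d. entries preserves its law. -/
lemma measurePreserving_flip_pi (n N : ℕ) (γ : Measure ℝ) [IsProbabilityMeasure γ] :
    MeasurePreserving (fun (X : Fin n → Fin N → ℝ) (j : Fin N) (i : Fin n) => X i j)
      (Measure.pi fun _ : Fin n => Measure.pi fun _ : Fin N => γ)
      (Measure.pi fun _ : Fin N => Measure.pi fun _ : Fin n => γ) := by
  refine ⟨by fun_prop, ?_⟩
  simp_rw [← Measure.infinitePi_eq_pi]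
  rw [← Measure.infinitePi_map_curry (fun (_ : Fin n) (_ : Fin N) => γ),
    ← Measure.infinitePi_map_curry (fun (_ : Fin N) (_ : Fin n) => γ),
    ← Measure.infinitePi_map_piCongrLeft (fun _ : Fin N × Fin n => γ)
      (Equiv.prodComm (Fin n) (Fin N)),
    Measure.map_map (by fun_prop) (by fun_prop), Measure.map_map (by fun_prop) (by fun_prop)]
  congr 1

/-- The mean zero Gaussian law is stable under summing `N` independent copies: up to the scaling
factor `√N`, the sum has the law of a single copy. -/
lemma map_sum_pi_gaussian (v : NNReal) (N : ℕ) :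
    (Measure.pi fun _ : Fin N => gaussianReal 0 v).map (fun x => ∑ j, x j) =
      (gaussianReal 0 v).map (fun t => √(N : ℝ) * t) := by
  have hlaw : ∀ j : Fin N, HasLaw (fun x : Fin N → ℝ => x j) (gaussianReal 0 v)
      (Measure.pi fun _ : Fin N => gaussianReal 0 v) := fun j =>
    ⟨(measurable_pi_apply j).aemeasurable,
      (measurePreserving_eval (fun _ : Fin N => gaussianReal 0 v) j).map_eq⟩
  have hind : iIndepFun (fun (j : Fin N) (x : Fin N → ℝ) => x j)
      (Measure.pi fun _ : Fin N => gaussianReal 0 v) :=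
    iIndepFun_pi (X := fun _ t => t) (fun _ => by fun_prop)
  have hG := iIndepFun.hasGaussianLaw_fun_sum (fun j => (hlaw j).hasGaussianLaw) hind
  rw [hG.map_eq_gaussianReal, gaussianReal_map_const_mul]
  have hmean : ∫ x : Fin N → ℝ, ∑ j, x j ∂(Measure.pi fun _ : Fin N => gaussianReal 0 v) = 0 := by
    rw [integral_finsetSum _ (fun j _ => (hlaw j).hasGaussianLaw.integrable)]
    simp [(hlaw _).integral_eq]
  have hvar : Var[fun x : Fin N → ℝ => ∑ j, x j; Measure.pi fun _ : Fin N => gaussianReal 0 v]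
      = N * v := by
    have := variance_sum_pi (ι := Fin N) (μ := fun _ => gaussianReal 0 v) (X := fun _ t => t)
      (fun _ => memLp_id_gaussianReal 2)
    rw [variance_fun_id_gaussianReal] at this
    simpa [Finset.sum_fn] using this
  rw [hmean, hvar]
  congr 1
  · simp
  · ext; simp; positivity

/-- The logarithm of a single factor of `enkfLik`, as a function of one coordinate of the
ensemble. -/
noncomputable def coordLogLik (N : ℕ) (θ b : ℝ) (x : Fin N → ℝ) : ℝ :=
  -(1 / 2) * Real.log (2 * Real.pi * sigmaHatSq N θ x)
    - (b - sampleMean N x) ^ 2 / (2 * sigmaHatSq N θ x)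

lemma le_sigmaHatSq {N : ℕ} (hN : 2 ≤ N) (θ : ℝ) (x : Fin N → ℝ) : θ ≤ sigmaHatSq N θ x := by
  have hN' : (2 : ℝ) ≤ N := by exact_mod_cast hN
  have h1 : 0 ≤ 1 / ((N : ℝ) - 1) := one_div_nonneg.2 (by linarith)
  have h2 : 0 ≤ ∑ j, (x j - sampleMean N x) ^ 2 := Finset.sum_nonneg fun j _ => sq_nonneg _
  unfold sigmaHatSq
  nlinarith [mul_nonneg h1 h2]

lemma log_enkfLik {n N : ℕ} (hN : 2 ≤ N) {θ : ℝ} (hθ : 0 < θ) (y : Fin n → ℝ)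
    (X : Fin N → Fin n → ℝ) :
    Real.log (enkfLik n N θ y X) = ∑ i, coordLogLik N θ (y i) (fun j => X j i) := by
  have hpos : ∀ i, 0 < 2 * Real.pi * sigmaHatSq N θ (fun j => X j i) := fun i =>
    mul_pos (by positivity) (hθ.trans_le (le_sigmaHatSq hN θ _))
  unfold enkfLik
  rw [Real.log_prod fun i _ => (mul_pos (Real.rpow_pos_of_pos (hpos i) _) (Real.exp_pos _)).ne']
  refine Finset.sum_congr rfl fun i _ => ?_
  rw [Real.log_mul (Real.rpow_pos_of_pos (hpos i) _).ne' (Real.exp_pos _).ne', Real.log_exp,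
    Real.log_rpow (hpos i), coordLogLik]
  ring

lemma measurable_coordLogLik (N : ℕ) (θ b : ℝ) : Measurable (coordLogLik N θ b) := by
  unfold coordLogLik sigmaHatSq sampleMean
  fun_prop

/-- The deviation of `σ̂²` from `κ + θ` in terms of the two sums `∑ (xⱼ² - κ)` and `∑ xⱼ`. -/
lemma sigmaHatSq_sub {N : ℕ} (hN : 2 ≤ N) (κ θ : ℝ) (x : Fin N → ℝ) :
    sigmaHatSq N θ x - (κ + θ) =
      (1 / ((N : ℝ) - 1)) * (∑ j, (x j ^ 2 - κ) + κ - (∑ j, x j) ^ 2 / N) := by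
  have hN' : (2 : ℝ) ≤ N := by exact_mod_cast hN
  have h1 : (N : ℝ) - 1 ≠ 0 := by linarith
  have h2 : (N : ℝ) ≠ 0 := by linarith
  have h3 : ∑ j, (x j - sampleMean N x) ^ 2
      = ∑ j, x j ^ 2 - 2 * sampleMean N x * ∑ j, x j + N * sampleMean N x ^ 2 := by
    simp_rw [sub_sq, Finset.sum_add_distrib, Finset.sum_sub_distrib, Finset.mul_sum]
    simp
    exact Finset.sum_congr rfl fun j _ => by ring
  rw [sigmaHatSq, h3, sampleMean, Finset.sum_sub_distrib]
  simp only [Finset.sum_const, Finset.card_univ, Fintype.card_fin, nsmul_eq_mul]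
  field_simp
  ring

/-- On `[θ, ∞)` the logarithm is Lipschitz with constant `1 / θ`. -/
lemma abs_log_sub_log_le {θ s t : ℝ} (hθ : 0 < θ) (hs : θ ≤ s) (ht : θ ≤ t) :
    |Real.log s - Real.log t| ≤ |s - t| / θ := by
  have key : ∀ {s t : ℝ}, θ ≤ s → θ ≤ t → Real.log s - Real.log t ≤ |s - t| / θ := by
    intro s t hs ht
    have hs0 := hθ.trans_le hs
    have ht0 := hθ.trans_le ht
    rw [← Real.log_div hs0.ne' ht0.ne']
    calc Real.log (s / t) ≤ s / t - 1 := Real.log_le_sub_one_of_pos (by positivity)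
      _ = (s - t) / t := by field_simp
      _ ≤ |s - t| / t := by gcongr; exact le_abs_self _
      _ ≤ |s - t| / θ := by gcongr
  rw [abs_le]
  constructor
  · have := key ht hs
    rw [abs_sub_comm] at this
    linarith
  · exact key hs ht

/-- For variances bounded below by `θ`, the Gaussian log density is locally Lipschitz in the variance
and in the mean: here `s`, `t` are variances and `m`, `0` are means. -/
lemma abs_logDensity_sub_le {θ B s t b m : ℝ} (hθ : 0 < θ) (hs : θ ≤ s) (ht : θ ≤ t)
    (hb : |b| ≤ B) :
    |(-(1 / 2) * Real.log (2 * Real.pi * s) - (b - m) ^ 2 / (2 * s))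
      - (-(1 / 2) * Real.log (2 * Real.pi * t) - b ^ 2 / (2 * t))| ≤
      (1 / (2 * θ) + B ^ 2 / (2 * θ ^ 2)) * |s - t| + 1 / (2 * θ) * m ^ 2
        + B / θ * |m| := by
  have hs0 := hθ.trans_le hs
  have ht0 := hθ.trans_le ht
  have hB : 0 ≤ B := (abs_nonneg b).trans hb
  rw [Real.log_mul (by positivity) hs0.ne', Real.log_mul (by positivity) ht0.ne']
  have e : (-(1 / 2) * (Real.log (2 * Real.pi) + Real.log s) - (b - m) ^ 2 / (2 * s))
      - (-(1 / 2) * (Real.log (2 * Real.pi) + Real.log t) - b ^ 2 / (2 * t))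
      = -(1 / 2) * (Real.log s - Real.log t) + b ^ 2 * (s - t) / (2 * (s * t))
        + -(m ^ 2 / (2 * s)) + b * m / s := by
    field_simp
    ring
  rw [e]
  have h1 : |-(1 / 2) * (Real.log s - Real.log t)| ≤ 1 / (2 * θ) * |s - t| := by
    rw [abs_mul, abs_neg, abs_of_pos (by norm_num : (0 : ℝ) < 1 / 2)]
    have := abs_log_sub_log_le hθ hs ht
    calc _ ≤ 1 / 2 * (|s - t| / θ) := by gcongr
      _ = _ := by field_simp
  have h2 : |b ^ 2 * (s - t) / (2 * (s * t))| ≤ B ^ 2 / (2 * θ ^ 2) * |s - t| := by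
    rw [abs_div, abs_mul, abs_pow, abs_of_pos (by positivity : 0 < 2 * (s * t))]
    calc _ ≤ B ^ 2 * |s - t| / (2 * (θ * θ)) := by gcongr
      _ = _ := by field_simp
  have h3 : |-(m ^ 2 / (2 * s))| ≤ 1 / (2 * θ) * m ^ 2 := by
    rw [abs_neg, abs_of_nonneg (by positivity)]
    calc _ ≤ m ^ 2 / (2 * θ) := by gcongr
      _ = _ := by field_simp
  have h4 : |b * m / s| ≤ B / θ * |m| := by
    rw [abs_div, abs_mul, abs_of_pos hs0]
    calc _ ≤ B * |m| / θ := by gcongr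
      _ = _ := by field_simp
  calc _ ≤ |-(1 / 2) * (Real.log s - Real.log t)| + |b ^ 2 * (s - t) / (2 * (s * t))|
        + |-(m ^ 2 / (2 * s))| + |b * m / s| :=
        (abs_add_le _ _).trans (add_le_add_left ((abs_add_le _ _).trans
          (add_le_add_left (abs_add_le _ _) _)) _)
    _ ≤ _ := by linarith

/-- Pointwise bound of the squared deviation of `coordLogLik` from its value at the population mean
and variance, by polynomials in the two sums `∑ (xⱼ² - κ)` and `∑ xⱼ`. -/
lemma sq_coordLogLik_sub_le {κ θ B b : ℝ} (hκ : 0 < κ) (hθ : 0 < θ) (hb : |b| ≤ B) {N : ℕ}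
    (hN : 2 ≤ N) (x : Fin N → ℝ) :
    (coordLogLik N θ b x
      - (-(1 / 2) * Real.log (2 * Real.pi * (κ + θ)) - b ^ 2 / (2 * (κ + θ)))) ^ 2 ≤
      3 * (1 / (2 * θ) + B ^ 2 / (2 * θ ^ 2)) ^ 2 *
        (12 / N ^ 2 * ((∑ j, (x j ^ 2 - κ)) ^ 2 + κ ^ 2 + (∑ j, x j) ^ 4 / N ^ 2))
      + 3 * (1 / (2 * θ)) ^ 2 * ((∑ j, x j) ^ 4 / N ^ 4)
      + 3 * (B / θ) ^ 2 * ((∑ j, x j) ^ 2 / N ^ 2) := by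
  have hN' : (2 : ℝ) ≤ N := by exact_mod_cast hN
  have hN0 : (0 : ℝ) < N := by linarith
  have hB : 0 ≤ B := (abs_nonneg b).trans hb
  have h := abs_logDensity_sub_le (m := sampleMean N x) hθ (le_sigmaHatSq hN θ x)
    (by linarith : θ ≤ κ + θ) hb
  rw [← coordLogLik] at h
  have hD : (sigmaHatSq N θ x - (κ + θ)) ^ 2 ≤
      12 / N ^ 2 * ((∑ j, (x j ^ 2 - κ)) ^ 2 + κ ^ 2 + (∑ j, x j) ^ 4 / N ^ 2) := by
    rw [sigmaHatSq_sub hN, mul_pow]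
    -- `N - 1 ≥ N / 2` since `N ≥ 2`
    have h1 : 1 / ((N : ℝ) - 1) ≤ 2 / N := by
      rw [div_le_div_iff₀ (by linarith) hN0]; linarith
    have h0 : 0 ≤ 1 / ((N : ℝ) - 1) := one_div_nonneg.2 (by linarith)
    have h2 : ∀ p q r : ℝ, (p + q - r) ^ 2 ≤ 3 * (p ^ 2 + q ^ 2 + r ^ 2) := fun p q r => by
      nlinarith [sq_nonneg (p - q), sq_nonneg (p + r), sq_nonneg (q + r)]
    calc _ ≤ (2 / (N : ℝ)) ^ 2 * (3 * ((∑ j, (x j ^ 2 - κ)) ^ 2 + κ ^ 2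
          + ((∑ j, x j) ^ 2 / N) ^ 2)) := by
          gcongr
          exact h2 _ _ _
      _ = _ := by ring
  have h3 : ∀ p q r : ℝ, (p + q + r) ^ 2 ≤ 3 * (p ^ 2 + q ^ 2 + r ^ 2) := fun p q r => by
    nlinarith [sq_nonneg (p - q), sq_nonneg (p - r), sq_nonneg (q - r)]
  calc _ ≤ ((1 / (2 * θ) + B ^ 2 / (2 * θ ^ 2)) * |sigmaHatSq N θ x - (κ + θ)|
        + 1 / (2 * θ) * sampleMean N x ^ 2 + B / θ * |sampleMean N x|) ^ 2 :=
        sq_le_sq' (neg_le_of_abs_le h) (le_of_abs_le h)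
    _ ≤ _ := h3 _ _ _
    _ = 3 * (1 / (2 * θ) + B ^ 2 / (2 * θ ^ 2)) ^ 2 * (sigmaHatSq N θ x - (κ + θ)) ^ 2
        + 3 * (1 / (2 * θ)) ^ 2 * ((∑ j, x j) ^ 4 / N ^ 4)
        + 3 * (B / θ) ^ 2 * ((∑ j, x j) ^ 2 / N ^ 2) := by
        simp only [mul_pow, sq_abs, sampleMean]
        ring
    _ ≤ _ := by gcongr

lemma integrable_pow_gaussianReal (v : NNReal) (k : ℕ) :
    Integrable (fun t : ℝ => t ^ k) (gaussianReal 0 v) := by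
  have h := (memLp_id_gaussianReal (μ := 0) (v := v) k).integrable_norm_pow'
  refine h.mono (by fun_prop) (Filter.Eventually.of_forall fun t => ?_)
  simp

/-- Even moments of the sum of `N` independent centred Gaussians, by scaling. -/
lemma moment_sum_pi_gaussian (v : NNReal) (N p : ℕ) :
    Integrable (fun x : Fin N → ℝ => (∑ j, x j) ^ (2 * p))
        (Measure.pi fun _ : Fin N => gaussianReal 0 v) ∧
      ∫ x : Fin N → ℝ, (∑ j, x j) ^ (2 * p) ∂(Measure.pi fun _ : Fin N => gaussianReal 0 v) =
        N ^ p * ∫ t, t ^ (2 * p) ∂(gaussianReal 0 v) := by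
  have hm : AEMeasurable (fun x : Fin N → ℝ => ∑ j, x j)
      (Measure.pi fun _ : Fin N => gaussianReal 0 v) := Measurable.aemeasurable (by fun_prop)
  have hs : ∀ t : ℝ, (√(N : ℝ) * t) ^ (2 * p) = N ^ p * t ^ (2 * p) := fun t => by
    rw [mul_pow, pow_mul (√(N : ℝ)), Real.sq_sqrt (Nat.cast_nonneg N)]
  constructor
  · have h : Integrable (fun t : ℝ => t ^ (2 * p))
        ((Measure.pi fun _ : Fin N => gaussianReal 0 v).map (fun x => ∑ j, x j)) := by
      rw [map_sum_pi_gaussian, integrable_map_measure (by fun_prop) (by fun_prop)]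
      simp only [Function.comp_def, hs]
      exact (integrable_pow_gaussianReal v _).const_mul _
    exact h.comp_aemeasurable hm
  · rw [← integral_map (f := fun t : ℝ => t ^ (2 * p)) hm (by fun_prop), map_sum_pi_gaussian,
      integral_map (by fun_prop) (by fun_prop)]
    simp only [hs]
    exact integral_const_mul _ _

/-- The centred second order sum has second moment linear in `N`. -/
lemma moment_sum_sq_sub (v : NNReal) (N : ℕ) :
    Integrable (fun x : Fin N → ℝ => (∑ j, (x j ^ 2 - v)) ^ 2)
        (Measure.pi fun _ : Fin N => gaussianReal 0 v) ∧
      ∫ x : Fin N → ℝ, (∑ j, (x j ^ 2 - v)) ^ 2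
          ∂(Measure.pi fun _ : Fin N => gaussianReal 0 v) =
        N * Var[fun t => t ^ 2 - (v : ℝ); gaussianReal 0 v] := by
  have hL : MemLp (fun t : ℝ => t ^ 2 - (v : ℝ)) 2 (gaussianReal 0 v) := by
    refine MemLp.sub ?_ (memLp_const _)
    rw [memLp_two_iff_integrable_sq (by fun_prop)]
    simpa [← pow_mul] using integrable_pow_gaussianReal v 4
  have hL' : ∀ j : Fin N, MemLp (fun x : Fin N → ℝ => x j ^ 2 - (v : ℝ)) 2
      (Measure.pi fun _ : Fin N => gaussianReal 0 v) := fun j =>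
    hL.comp_measurePreserving (measurePreserving_eval (fun _ : Fin N => gaussianReal 0 v) j)
  have hS : MemLp (fun x : Fin N → ℝ => ∑ j, (x j ^ 2 - (v : ℝ))) 2
      (Measure.pi fun _ : Fin N => gaussianReal 0 v) :=
    memLp_finsetSum _ fun j _ => hL' j
  have h0 : ∫ t, (t ^ 2 - (v : ℝ)) ∂(gaussianReal 0 v) = 0 := by
    have h2 : ∫ t, t ^ 2 ∂(gaussianReal 0 v) = v := by
      have := variance_fun_id_gaussianReal (μ := 0) (v := v)
      rwa [variance_of_integral_eq_zero (by fun_prop) integral_id_gaussianReal] at this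
    rw [integral_sub (integrable_pow_gaussianReal v 2) (integrable_const _), h2]
    simp
  have h0' : ∫ x : Fin N → ℝ, ∑ j, (x j ^ 2 - (v : ℝ))
      ∂(Measure.pi fun _ : Fin N => gaussianReal 0 v) = 0 := by
    rw [integral_finsetSum _ fun j _ => (hL' j).integrable (by norm_num)]
    refine Finset.sum_eq_zero fun j _ => ?_
    rw [integral_comp_eval (μ := fun _ : Fin N => gaussianReal 0 v) (i := j)
      (f := fun t : ℝ => t ^ 2 - (v : ℝ)) (by fun_prop), h0]
  refine ⟨hS.integrable_sq, ?_⟩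
  have hV := variance_sum_pi (ι := Fin N) (μ := fun _ => gaussianReal 0 v)
    (X := fun _ t => t ^ 2 - (v : ℝ)) (fun _ => hL)
  rw [Finset.sum_fn, variance_of_integral_eq_zero hS.aemeasurable h0'] at hV
  simpa using hV

/-- Each coordinate contributes `O(1 / N)` to the variance, uniformly in the bounded datum. -/
lemma exists_variance_coordLogLik_le (κ θ B : ℝ) (hκ : 0 < κ) (hθ : 0 < θ) :
    ∃ C > 0, ∀ b : ℝ, |b| ≤ B → ∀ N : ℕ, 2 ≤ N →
      MemLp (coordLogLik N θ b) 2 (Measure.pi fun _ : Fin N => gaussianReal 0 κ.toNNReal) ∧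
      Var[coordLogLik N θ b; Measure.pi fun _ : Fin N => gaussianReal 0 κ.toNNReal] ≤ C / N := by
  set v := κ.toNNReal with hv
  have hvκ : (v : ℝ) = κ := Real.coe_toNNReal κ hκ.le
  set V := Var[fun t => t ^ 2 - (v : ℝ); gaussianReal 0 v] with hV
  set m2 := ∫ t, t ^ (2 * 1) ∂(gaussianReal 0 v) with hm2
  set m4 := ∫ t, t ^ (2 * 2) ∂(gaussianReal 0 v) with hm4
  set a₁ := 3 * (1 / (2 * θ) + B ^ 2 / (2 * θ ^ 2)) ^ 2 with ha₁
  set a₂ := 3 * (1 / (2 * θ)) ^ 2 with ha₂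
  set a₃ := 3 * (B / θ) ^ 2 with ha₃
  have hV0 : 0 ≤ V := variance_nonneg _ _
  have hm20 : 0 ≤ m2 := integral_nonneg fun t => (even_two_mul 1).pow_nonneg t
  have hm40 : 0 ≤ m4 := integral_nonneg fun t => (even_two_mul 2).pow_nonneg t
  have ha₁0 : 0 ≤ a₁ := by positivity
  have ha₂0 : 0 ≤ a₂ := by positivity
  have ha₃0 : 0 ≤ a₃ := by positivity
  refine ⟨a₁ * (12 * (V + κ ^ 2 + m4)) + a₂ * m4 + a₃ * m2 + 1, by positivity, ?_⟩
  intro b hb N hN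
  have hN1 : (1 : ℝ) ≤ N := by exact_mod_cast (by omega : 1 ≤ N)
  have hN0 : (0 : ℝ) < N := by linarith
  set P := Measure.pi fun _ : Fin N => gaussianReal 0 v with hP
  set c := -(1 / 2) * Real.log (2 * Real.pi * (κ + θ)) - b ^ 2 / (2 * (κ + θ)) with hc
  obtain ⟨iZ, eZ⟩ := moment_sum_sq_sub v N
  obtain ⟨iT, eT⟩ := moment_sum_pi_gaussian v N 1
  obtain ⟨iQ, eQ⟩ := moment_sum_pi_gaussian v N 2
  rw [hvκ] at iZ eZ
  rw [← hvκ, ← hV, hvκ] at eZ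
  rw [← hP] at iZ eZ iT eT iQ eQ
  have hbound : ∀ x : Fin N → ℝ, (coordLogLik N θ b x - c) ^ 2 ≤
      a₁ * (12 / N ^ 2 * ((∑ j, (x j ^ 2 - κ)) ^ 2 + κ ^ 2 + (∑ j, x j) ^ (2 * 2) / N ^ 2))
      + a₂ * ((∑ j, x j) ^ (2 * 2) / N ^ 4) + a₃ * ((∑ j, x j) ^ (2 * 1) / N ^ 2) :=
    fun x => sq_coordLogLik_sub_le hκ hθ hb hN x
  have i1 : Integrable (fun x : Fin N → ℝ => a₁ * (12 / N ^ 2 * ((∑ j, (x j ^ 2 - κ)) ^ 2 + κ ^ 2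
      + (∑ j, x j) ^ (2 * 2) / N ^ 2))) P :=
    (((iZ.add (integrable_const _)).add (iQ.div_const _)).const_mul _).const_mul _
  have i2 : Integrable (fun x : Fin N → ℝ => a₂ * ((∑ j, x j) ^ (2 * 2) / N ^ 4)) P :=
    (iQ.div_const _).const_mul _
  have i3 : Integrable (fun x : Fin N → ℝ => a₃ * ((∑ j, x j) ^ (2 * 1) / N ^ 2)) P :=
    (iT.div_const _).const_mul _
  have hmeas : Measurable (fun x => coordLogLik N θ b x - c) :=
    (measurable_coordLogLik N θ b).sub_const c
  have hsq : Integrable (fun x => (coordLogLik N θ b x - c) ^ 2) P := by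
    refine ((i1.add i2).add i3).mono' (hmeas.pow_const 2).aestronglyMeasurable
      (Filter.Eventually.of_forall fun x => ?_)
    rw [Real.norm_of_nonneg (sq_nonneg _)]
    exact hbound x
  have hmem : MemLp (fun x => coordLogLik N θ b x - c) 2 P :=
    (memLp_two_iff_integrable_sq hmeas.aestronglyMeasurable).2 hsq
  refine ⟨by simpa [Pi.add_def] using hmem.add (memLp_const c), ?_⟩
  rw [← variance_sub_const (measurable_coordLogLik N θ b).aestronglyMeasurable c]
  refine (variance_le_expectation_sq hmeas.aestronglyMeasurable).trans ?_
  calc ∫ x, (coordLogLik N θ b x - c) ^ 2 ∂P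
      ≤ ∫ x, (a₁ * (12 / N ^ 2 * ((∑ j, (x j ^ 2 - κ)) ^ 2 + κ ^ 2
          + (∑ j, x j) ^ (2 * 2) / N ^ 2)) + a₂ * ((∑ j, x j) ^ (2 * 2) / N ^ 4)
          + a₃ * ((∑ j, x j) ^ (2 * 1) / N ^ 2)) ∂P :=
        integral_mono hsq ((i1.add i2).add i3) hbound
    _ = a₁ * (12 / N ^ 2 * (N * V + κ ^ 2 + N ^ 2 * m4 / N ^ 2)) + a₂ * (N ^ 2 * m4 / N ^ 4)
          + a₃ * (N ^ 1 * m2 / N ^ 2) := by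
        have i12 := i1.add i2
        have iZκ := iZ.add (integrable_const (κ ^ 2))
        simp only [Pi.add_def] at i12 iZκ
        rw [integral_add i12 i3, integral_add i1 i2]
        simp only [integral_const_mul, integral_div]
        rw [integral_add iZκ (iQ.div_const _),
          integral_add iZ (integrable_const _), integral_div, eZ, eT, eQ, ← hm2, ← hm4]
        simp
    _ = (a₁ * (12 * (V + (κ ^ 2 + m4) / N)) + a₂ * (m4 / N) + a₃ * m2) / N := by
        field_simp
        ring
    _ ≤ (a₁ * (12 * (V + (κ ^ 2 + m4))) + a₂ * m4 + a₃ * m2) / N := by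
        gcongr
        · exact div_le_self (by positivity) hN1
        · exact div_le_self hm40 hN1
    _ ≤ _ := div_le_div_of_nonneg_right (by linarith) hN0.le

/-- Proposition 2: `Var(log L^E) = O(n/N)`. For fixed `κ, θ, B > 0` there is a
constant `C > 0` such that for all `n ≥ 1`, all data `y` bounded by `B`, and all
ensemble sizes `N ≥ 2`, the variance (over i.i.d. `N_n(0, κ I_n)` ensembles) of the
log EnKF likelihood is at most `C·n/N`. -/
theorem enkf_loglik_variance_linear
    (κ θ B : ℝ) (hκ : 0 < κ) (hθ : 0 < θ) (hB : 0 < B) :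
    ∃ C > 0, ∀ (n : ℕ), 1 ≤ n → ∀ (y : Fin n → ℝ), (∀ i, |y i| ≤ B) →
      ∀ (N : ℕ), 2 ≤ N →
        variance (fun X : Fin N → Fin n → ℝ => Real.log (enkfLik n N θ y X))
          (Measure.pi fun _ : Fin N =>
            Measure.pi fun _ : Fin n => gaussianReal 0 κ.toNNReal)
        ≤ C * n / N := by
  obtain ⟨C, hC, h⟩ := exists_variance_coordLogLik_le κ θ B hκ hθ
  refine ⟨C, hC, fun n _ y hy N hN => ?_⟩
  have hflip := measurePreserving_flip_pi n N (gaussianReal 0 κ.toNNReal)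
  simp_rw [log_enkfLik hN hθ]
  rw [← hflip.map_eq, variance_map ?_ hflip.aemeasurable]
  · have hV := variance_sum_pi (ι := Fin n)
      (μ := fun _ => Measure.pi fun _ : Fin N => gaussianReal 0 κ.toNNReal)
      (X := fun i => coordLogLik N θ (y i)) (fun i => (h (y i) (hy i) N hN).1)
    rw [Finset.sum_fn] at hV
    calc _ = _ := hV
      _ ≤ ∑ _i : Fin n, C / N := Finset.sum_le_sum fun i _ => (h (y i) (hy i) N hN).2
      _ = C * n / N := by simp; ring
  · refine (Finset.measurable_sum _ fun i _ => ?_).aemeasurable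
    exact (measurable_coordLogLik N θ (y i)).comp (by fun_prop)
end

section
/- In the setting of Example 1, let X^(1),…,X^(N) be independent draws from N_n(0, κ I_n), and let L^P = (1/N) ∑_{j=1}^N ∏_{i=1}^n (2πθ)^{−1/2} exp(−(X_i^(j) − y_i)²/(2θ)) be the particle likelihood. Then the relative variance of L^P satisfies exactly Var(L^P)/(E[L^P])² = (1/N)·( ρⁿ · ∏_{i=1}^n exp(γ·y_i²) − 1 ), where ρ = (κ+θ)/√(θ(2κ+θ)) > 1 and γ = κ/((κ+θ)(2κ+θ)) > 0. In particular, the relative variance of the particle likelihood grows exponentially in the dimension n for fixed N. -/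
/-!
The particle likelihood is the empirical mean of `f (X j)`, where
`f x = ∏ i, (2πθ)^(-1/2) exp (-(x i - y i)² / (2θ))` is bounded and the `X j` are i.i.d., so its
relative variance is `(1/N) (E[f²] / (E f)² - 1)` (`relative_variance_average`).

Both moments factor over the coordinates. The square of a Gaussian kernel of variance `θ` is a
Gaussian kernel of variance `θ/2`, so each factor is the integral of a Gaussian kernel against
`gaussianReal 0 κ`, computed by completing the square (`integral_exp_gaussianReal`).
The coordinatewise ratio of the second moment to the squared first moment is `ρ exp (γ y_i²)`
(`moment_ratio`).
-/

open MeasureTheory ProbabilityTheory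

/-- Integral of an unnormalised Gaussian kernel of variance `s` against a centred Gaussian of
variance `κ`, obtained by completing the square. -/
lemma integral_exp_gaussianReal {κ s : ℝ} (hκ : 0 < κ) (hs : 0 < s) (a : ℝ) :
    ∫ x, Real.exp (-(x - a) ^ 2 / (2 * s)) ∂(gaussianReal 0 κ.toNNReal)
      = Real.sqrt (s / (κ + s)) * Real.exp (-a ^ 2 / (2 * (κ + s))) := by
  have hv : κ.toNNReal ≠ 0 := by simpa using hκ
  rw [integral_gaussianReal_eq_integral_smul hv]
  have hpt : ∀ x : ℝ, gaussianPDFReal 0 κ.toNNReal x • Real.exp (-(x - a) ^ 2 / (2 * s))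
      = ((Real.sqrt (2 * Real.pi * κ))⁻¹ * Real.exp (-a ^ 2 / (2 * (κ + s)))) *
        Real.exp (-((κ + s) / (2 * κ * s)) * (x - κ * a / (κ + s)) ^ 2) := by
    intro x
    rw [gaussianPDFReal_def, Real.coe_toNNReal κ hκ.le, smul_eq_mul, mul_assoc _⁻¹, mul_assoc _⁻¹,
      ← Real.exp_add, ← Real.exp_add]
    congr 2
    field_simp
    ring
  simp_rw [hpt]
  rw [integral_const_mul,
    integral_sub_right_eq_self
      (fun x : ℝ => Real.exp (-((κ + s) / (2 * κ * s)) * x ^ 2)) (κ * a / (κ + s)),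
    integral_gaussian, mul_right_comm, ← Real.sqrt_inv, ← Real.sqrt_mul (by positivity)]
  congr 2
  field_simp

/-- For a square-integrable statistic `f` with nonzero mean, the relative variance of the empirical mean of
`N` independent copies is `1/N` times the relative variance of `f`. -/
lemma relative_variance_average {E : Type*} [MeasurableSpace E] (μ : Measure E)
    [IsProbabilityMeasure μ] {f : E → ℝ} (hf : MemLp f 2 μ) (hm : ∫ x, f x ∂μ ≠ 0)
    {N : ℕ} (hN : 1 ≤ N) :
    variance (fun X : Fin N → E => (1 / (N : ℝ)) * ∑ j, f (X j)) (Measure.pi fun _ => μ)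
      / (∫ X : Fin N → E, (1 / (N : ℝ)) * ∑ j, f (X j) ∂(Measure.pi fun _ => μ)) ^ 2
    = (1 / (N : ℝ)) * ((∫ x, f x ^ 2 ∂μ) / (∫ x, f x ∂μ) ^ 2 - 1) := by
  have hN0 : (N : ℝ) ≠ 0 := by positivity
  have hmean : ∫ X : Fin N → E, (1 / (N : ℝ)) * ∑ j, f (X j) ∂(Measure.pi fun _ => μ)
      = ∫ x, f x ∂μ := by
    have hint : Integrable f μ := hf.integrable (by norm_num)
    rw [integral_const_mul, integral_finsetSum]
    · have h : ∀ j : Fin N, ∫ X : Fin N → E, f (X j) ∂(Measure.pi fun _ => μ) = ∫ x, f x ∂μ :=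
        fun j => integral_comp_eval (μ := fun _ : Fin N => μ) hint.aestronglyMeasurable
      simp only [h, Finset.sum_const, Finset.card_univ, Fintype.card_fin, nsmul_eq_mul]
      field_simp
    · intro j _
      exact (measurePreserving_eval (fun _ : Fin N => μ) j).integrable_comp_of_integrable hint
  have hsum : variance (fun X : Fin N → E => ∑ j, f (X j)) (Measure.pi fun _ => μ)
      = N * variance f μ := by
    have h := variance_sum_pi (μ := fun _ : Fin N => μ) (X := fun _ => f) (fun _ => hf)
    simp only [Finset.sum_const, Finset.card_univ, Fintype.card_fin, nsmul_eq_mul] at h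
    rw [← h]
    congr 1
    ext X
    simp
  rw [hmean, variance_const_mul, hsum, variance_eq_sub hf]
  simp only [Pi.pow_apply]
  field_simp

/-- The ratio of the second moment to the squared first moment for one coordinate, after the
common normalising constant has cancelled. -/
lemma moment_ratio {κ θ : ℝ} (hκ : 0 < κ) (hθ : 0 < θ) (y : ℝ) :
    (Real.sqrt (θ / 2 / (κ + θ / 2)) * Real.exp (-y ^ 2 / (2 * (κ + θ / 2))))
      / (Real.sqrt (θ / (κ + θ)) * Real.exp (-y ^ 2 / (2 * (κ + θ)))) ^ 2
    = (κ + θ) / Real.sqrt (θ * (2 * κ + θ)) *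
        Real.exp ((κ / ((κ + θ) * (2 * κ + θ))) * y ^ 2) := by
  have hexp : Real.exp (-y ^ 2 / (2 * (κ + θ / 2)))
      = Real.exp ((κ / ((κ + θ) * (2 * κ + θ))) * y ^ 2) *
        Real.exp (-y ^ 2 / (2 * (κ + θ))) ^ 2 := by
    rw [← Real.exp_nat_mul, ← Real.exp_add]
    congr 1
    have : κ + θ / 2 ≠ 0 := by positivity
    field_simp
    ring
  have hsqrt : Real.sqrt (θ / 2 / (κ + θ / 2)) = θ / Real.sqrt (θ * (2 * κ + θ)) := by
    have h : θ / 2 / (κ + θ / 2) = θ ^ 2 / (θ * (2 * κ + θ)) := by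
      field_simp
    rw [h, Real.sqrt_div (by positivity), Real.sqrt_sq hθ.le]
  have h0 : Real.sqrt (θ * (2 * κ + θ)) ≠ 0 := by positivity
  rw [hexp, hsqrt, mul_pow, Real.sq_sqrt (by positivity)]
  field_simp

/-- Exact relative variance of the particle likelihood in Example 1:
`Var(L^P)/(E L^P)² = (1/N)(ρⁿ ∏ᵢ exp(γ yᵢ²) − 1)` with
`ρ = (κ+θ)/√(θ(2κ+θ)) > 1` and `γ = κ/((κ+θ)(2κ+θ)) > 0`, so the relative variance
grows exponentially in the dimension `n` for fixed `N`. -/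
theorem particle_likelihood_relative_variance
    (n N : ℕ) (hn : 1 ≤ n) (hN : 1 ≤ N)
    (κ θ : ℝ) (hκ : 0 < κ) (hθ : 0 < θ) (y : Fin n → ℝ) :
    1 < (κ + θ) / Real.sqrt (θ * (2 * κ + θ)) ∧
    0 < κ / ((κ + θ) * (2 * κ + θ)) ∧
    variance (fun X : Fin N → Fin n → ℝ => particleLik n N θ y X)
        (Measure.pi fun _ : Fin N =>
          Measure.pi fun _ : Fin n => gaussianReal 0 κ.toNNReal)
      / (∫ X : Fin N → Fin n → ℝ, particleLik n N θ y X
          ∂(Measure.pi fun _ : Fin N =>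
            Measure.pi fun _ : Fin n => gaussianReal 0 κ.toNNReal)) ^ 2
    = (1 / (N : ℝ)) *
        (((κ + θ) / Real.sqrt (θ * (2 * κ + θ))) ^ n *
          (∏ i, Real.exp ((κ / ((κ + θ) * (2 * κ + θ))) * (y i) ^ 2)) - 1) := by
  refine ⟨?_, by positivity, ?_⟩
  · rw [one_lt_div (by positivity), Real.sqrt_lt' (by positivity)]
    nlinarith [sq_pos_of_pos hκ]
  unfold particleLik
  set c : ℝ := (2 * Real.pi * θ) ^ (-(1 : ℝ) / 2) with hc
  have hc0 : 0 < c := by positivity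
  set μ : Measure (Fin n → ℝ) := Measure.pi fun _ : Fin n => gaussianReal 0 κ.toNNReal with hμ
  set f : (Fin n → ℝ) → ℝ := fun x => ∏ i, c * Real.exp (-(x i - y i) ^ 2 / (2 * θ)) with hf
  have hmeas : Continuous f := by
    rw [hf]; fun_prop
  have hbound : ∀ x, ‖f x‖ ≤ ∏ _i : Fin n, c := by
    intro x
    rw [Real.norm_of_nonneg (Finset.prod_nonneg fun i _ => by positivity)]
    refine Finset.prod_le_prod (fun i _ => by positivity) fun i _ => ?_
    refine mul_le_of_le_one_right hc0.le (Real.exp_le_one_iff.2 ?_)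
    exact div_nonpos_of_nonpos_of_nonneg (neg_nonpos.2 (sq_nonneg _)) (by positivity)
  have hLp : MemLp f 2 μ :=
    MemLp.of_bound hmeas.aestronglyMeasurable _ (ae_of_all _ hbound)
  have h1 : ∫ x, f x ∂μ = ∏ i, (c * (Real.sqrt (θ / (κ + θ)) *
      Real.exp (-(y i) ^ 2 / (2 * (κ + θ))))) := by
    rw [hf, hμ, integral_fintype_prod_eq_prod
      (fun i (t : ℝ) => c * Real.exp (-(t - y i) ^ 2 / (2 * θ)))]
    exact Finset.prod_congr rfl fun i _ => by
      rw [integral_const_mul, integral_exp_gaussianReal hκ hθ]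
  have h2 : ∫ x, f x ^ 2 ∂μ = ∏ i, (c ^ 2 * (Real.sqrt (θ / 2 / (κ + θ / 2)) *
      Real.exp (-(y i) ^ 2 / (2 * (κ + θ / 2))))) := by
    have hsq : ∀ x, f x ^ 2 = ∏ i, c ^ 2 * Real.exp (-(x i - y i) ^ 2 / (2 * (θ / 2))) := by
      intro x
      rw [hf, ← Finset.prod_pow]
      refine Finset.prod_congr rfl fun i _ => ?_
      rw [mul_pow, ← Real.exp_nat_mul]
      congr 2
      field_simp
      push_cast
      ring
    simp_rw [hsq]
    rw [hμ, integral_fintype_prod_eq_prod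
      (fun i (t : ℝ) => c ^ 2 * Real.exp (-(t - y i) ^ 2 / (2 * (θ / 2))))]
    exact Finset.prod_congr rfl fun i _ => by
      rw [integral_const_mul, integral_exp_gaussianReal hκ (half_pos hθ)]
  have hm : ∫ x, f x ∂μ ≠ 0 := by
    rw [h1]
    exact (Finset.prod_pos fun i _ => by positivity).ne'
  refine (relative_variance_average μ hLp hm hN).trans ?_
  rw [h1, h2, ← Finset.prod_pow, ← Finset.prod_div_distrib]
  have hterm : ∀ i, (c ^ 2 * (Real.sqrt (θ / 2 / (κ + θ / 2)) *
      Real.exp (-(y i) ^ 2 / (2 * (κ + θ / 2))))) / (c * (Real.sqrt (θ / (κ + θ)) *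
      Real.exp (-(y i) ^ 2 / (2 * (κ + θ))))) ^ 2 = (κ + θ) / Real.sqrt (θ * (2 * κ + θ)) *
        Real.exp ((κ / ((κ + θ) * (2 * κ + θ))) * (y i) ^ 2) := by
    intro i
    rw [mul_pow c, mul_div_mul_left _ _ (by positivity), moment_ratio hκ hθ]
  simp only [hterm, Finset.prod_mul_distrib, Finset.prod_const, Finset.card_univ,
    Fintype.card_fin]
end
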